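/- The function u : ℝ² → ℝ defined by u(x,y) = 1/(x² + y²) on the open set D = ℝ² ∖ {(0,0)} satisfies the Țițeica PDE with parameter α = −4/27 at every point of D. -/

import Mathlib

/-!
For a rotation-invariant function `u(x, y) = f(s)`, `s = x² + y²`, both sides of the Țițeica PDE
depend on `s` alone: the Hessian determinant is `4 f' (f' + 2 s f'')` and
`x u_x + y u_y - u = 2 s f' - f`. The PDE thus reduces to the ordinary differential equation
`4 f' (f' + 2 s f'') = α (2 s f' - f) ^ 4`. For `f(s) = 1 / s` the left side is `-12 / s ^ 4` and
the right side `81 α / s ^ 4`, which forces `α = -4 / 27`.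
-/

/-- Partial derivative with respect to the first variable. -/
noncomputable def pdx (u : ℝ × ℝ → ℝ) (p : ℝ × ℝ) : ℝ :=
  deriv (fun x => u (x, p.2)) p.1

/-- Partial derivative with respect to the second variable. -/
noncomputable def pdy (u : ℝ × ℝ → ℝ) (p : ℝ × ℝ) : ℝ :=
  deriv (fun y => u (p.1, y)) p.2

/-- The Țițeica PDE with parameter `α` holds for `u` at the point `p`:
`u_xx · u_yy − u_xy² = α · (x·u_x + y·u_y − u)⁴`. -/
def TiteicaPDE (α : ℝ) (u : ℝ × ℝ → ℝ) (p : ℝ × ℝ) : Prop :=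
  pdx (pdx u) p * pdy (pdy u) p - (pdy (pdx u) p) ^ 2
    = α * (p.1 * pdx u p + p.2 * pdy u p - u p) ^ 4

open Filter Topology

/-- The rotation-invariant function on the plane whose value at squared radius `s` is `f s`.
Taking the squared radius as variable keeps the profile of a smooth function smooth at `0`. -/
def radial (f : ℝ → ℝ) (q : ℝ × ℝ) : ℝ :=
  f (q.1 ^ 2 + q.2 ^ 2)

theorem radial_swap (f : ℝ → ℝ) (q : ℝ × ℝ) : radial f q.swap = radial f q := by
  simp only [radial, Prod.fst_swap, Prod.snd_swap, add_comm]

theorem pdy_eq_pdx_swap (u : ℝ × ℝ → ℝ) (p : ℝ × ℝ) :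
    pdy u p = pdx (fun q => u q.swap) p.swap :=
  rfl

theorem pdx_congr {u v : ℝ × ℝ → ℝ} {p : ℝ × ℝ} (h : u =ᶠ[𝓝 p] v) : pdx u p = pdx v p := by
  have hline : Tendsto (fun x => (x, p.2)) (𝓝 p.1) (𝓝 p) :=
    (continuous_id.prodMk continuous_const).tendsto p.1
  exact (h.comp_tendsto hline).deriv_eq

theorem pdy_congr {u v : ℝ × ℝ → ℝ} {p : ℝ × ℝ} (h : u =ᶠ[𝓝 p] v) : pdy u p = pdy v p :=
  pdx_congr (h.comp_tendsto (continuous_swap.tendsto p.swap))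

theorem pdy_radial_eq_pdx_radial_swap (f : ℝ → ℝ) (p : ℝ × ℝ) :
    pdy (radial f) p = pdx (radial f) p.swap := by
  simp only [pdy_eq_pdx_swap, radial_swap]

theorem pdy_pdy_radial_eq_pdx_pdx_radial_swap (f : ℝ → ℝ) (p : ℝ × ℝ) :
    pdy (pdy (radial f)) p = pdx (pdx (radial f)) p.swap := by
  rw [pdy_eq_pdx_swap (pdy (radial f))]
  simp only [pdy_radial_eq_pdx_radial_swap, Prod.swap_swap]

section

variable {f f' : ℝ → ℝ} {d : ℝ} {p : ℝ × ℝ}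

theorem hasDerivAt_radial_fst (hf : HasDerivAt f d (p.1 ^ 2 + p.2 ^ 2)) :
    HasDerivAt (fun x => radial f (x, p.2)) (2 * p.1 * d) p.1 := by
  have hr : HasDerivAt (fun x => x ^ 2 + p.2 ^ 2) (2 * p.1) p.1 := by
    simpa using (hasDerivAt_pow 2 p.1).add_const (p.2 ^ 2)
  exact (hf.comp p.1 hr).congr_deriv (mul_comm d (2 * p.1))

theorem pdx_radial (hf : HasDerivAt f d (p.1 ^ 2 + p.2 ^ 2)) :
    pdx (radial f) p = 2 * p.1 * d :=
  (hasDerivAt_radial_fst hf).deriv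

theorem pdy_radial (hf : HasDerivAt f d (p.1 ^ 2 + p.2 ^ 2)) :
    pdy (radial f) p = 2 * p.2 * d := by
  rw [pdy_radial_eq_pdx_radial_swap]
  exact pdx_radial (by rwa [Prod.fst_swap, Prod.snd_swap, add_comm])

theorem pdx_radial_eventuallyEq
    (hf : ∀ᶠ s in 𝓝 (p.1 ^ 2 + p.2 ^ 2), HasDerivAt f (f' s) s) :
    pdx (radial f) =ᶠ[𝓝 p] fun q => 2 * q.1 * radial f' q := by
  have hr : Continuous fun q : ℝ × ℝ => q.1 ^ 2 + q.2 ^ 2 := by fun_prop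
  filter_upwards [(hr.tendsto p).eventually hf] with q hq
  exact pdx_radial hq

theorem pdx_pdx_radial (hf : ∀ᶠ s in 𝓝 (p.1 ^ 2 + p.2 ^ 2), HasDerivAt f (f' s) s)
    (hf' : HasDerivAt f' d (p.1 ^ 2 + p.2 ^ 2)) :
    pdx (pdx (radial f)) p = 2 * f' (p.1 ^ 2 + p.2 ^ 2) + 4 * p.1 ^ 2 * d := by
  have hlin : HasDerivAt (fun x : ℝ => 2 * x) 2 p.1 := by
    simpa using (hasDerivAt_id p.1).const_mul 2
  calc pdx (pdx (radial f)) p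
      = pdx (fun q => 2 * q.1 * radial f' q) p := pdx_congr (pdx_radial_eventuallyEq hf)
    _ = 2 * f' (p.1 ^ 2 + p.2 ^ 2) + 2 * p.1 * (2 * p.1 * d) :=
        (hlin.fun_mul (hasDerivAt_radial_fst hf')).deriv
    _ = 2 * f' (p.1 ^ 2 + p.2 ^ 2) + 4 * p.1 ^ 2 * d := by ring

theorem pdy_pdx_radial (hf : ∀ᶠ s in 𝓝 (p.1 ^ 2 + p.2 ^ 2), HasDerivAt f (f' s) s)
    (hf' : HasDerivAt f' d (p.1 ^ 2 + p.2 ^ 2)) :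
    pdy (pdx (radial f)) p = 4 * p.1 * p.2 * d := by
  calc pdy (pdx (radial f)) p
      = pdy (fun q => 2 * q.1 * radial f' q) p := pdy_congr (pdx_radial_eventuallyEq hf)
    _ = 2 * p.1 * pdy (radial f') p := deriv_const_mul_field (2 * p.1)
    _ = 4 * p.1 * p.2 * d := by rw [pdy_radial hf']; ring

theorem pdy_pdy_radial (hf : ∀ᶠ s in 𝓝 (p.1 ^ 2 + p.2 ^ 2), HasDerivAt f (f' s) s)
    (hf' : HasDerivAt f' d (p.1 ^ 2 + p.2 ^ 2)) :
    pdy (pdy (radial f)) p = 2 * f' (p.1 ^ 2 + p.2 ^ 2) + 4 * p.2 ^ 2 * d := by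
  rw [add_comm (p.1 ^ 2)] at hf hf' ⊢
  rw [pdy_pdy_radial_eq_pdx_pdx_radial_swap]
  exact pdx_pdx_radial (p := p.swap) hf hf'

theorem titeicaPDE_radial_iff {α s : ℝ} (hs : p.1 ^ 2 + p.2 ^ 2 = s)
    (hf : ∀ᶠ t in 𝓝 s, HasDerivAt f (f' t) t) (hf' : HasDerivAt f' d s) :
    TiteicaPDE α (radial f) p ↔
      4 * f' s * (f' s + 2 * s * d) = α * (2 * s * f' s - f s) ^ 4 := by
  subst hs
  have hHessian : pdx (pdx (radial f)) p * pdy (pdy (radial f)) p - pdy (pdx (radial f)) p ^ 2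
      = 4 * f' (p.1 ^ 2 + p.2 ^ 2)
        * (f' (p.1 ^ 2 + p.2 ^ 2) + 2 * (p.1 ^ 2 + p.2 ^ 2) * d) := by
    rw [pdx_pdx_radial hf hf', pdy_pdy_radial hf hf', pdy_pdx_radial hf hf']
    ring
  have hEuler : p.1 * pdx (radial f) p + p.2 * pdy (radial f) p - radial f p
      = 2 * (p.1 ^ 2 + p.2 ^ 2) * f' (p.1 ^ 2 + p.2 ^ 2) - f (p.1 ^ 2 + p.2 ^ 2) := by
    rw [pdx_radial hf.self_of_nhds, pdy_radial hf.self_of_nhds, radial]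
    ring
  rw [TiteicaPDE, hHessian, hEuler]

end

theorem hasDerivAt_one_div {𝕜 : Type*} [NontriviallyNormedField 𝕜] {s : 𝕜}
    (hs : s ≠ 0) : HasDerivAt (fun t => 1 / t) (-1 / s ^ 2) s := by
  simpa only [one_div, neg_div] using hasDerivAt_inv hs

theorem hasDerivAt_neg_one_div_sq {𝕜 : Type*} [NontriviallyNormedField 𝕜] {s : 𝕜}
    (hs : s ≠ 0) : HasDerivAt (fun t => -1 / t ^ 2) (2 / s ^ 3) s := by
  refine ((hasDerivAt_const s (-1)).fun_div (hasDerivAt_pow 2 s) (pow_ne_zero 2 hs)).congr_deriv ?_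
  push_cast
  field_simp
  ring

/-- The function `u(x,y) = 1/(x² + y²)` solves the Țițeica PDE with `α = −4/27` on
`ℝ² ∖ {(0,0)}` (Section 8 of the paper). -/
theorem titeica_solution_inv_r2 :
    ∀ p : ℝ × ℝ, p ≠ (0, 0) →
      TiteicaPDE (-4 / 27) (fun q : ℝ × ℝ => 1 / (q.1 ^ 2 + q.2 ^ 2)) p := by
  intro p hp
  have hs : p.1 ^ 2 + p.2 ^ 2 ≠ 0 := by
    simpa only [ne_eq, sq, mul_self_add_mul_self_eq_zero, Prod.ext_iff] using hp
  have hderiv : ∀ᶠ s in 𝓝 (p.1 ^ 2 + p.2 ^ 2),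
      HasDerivAt (fun t : ℝ => 1 / t) (-1 / s ^ 2) s :=
    (eventually_ne_nhds hs).mono fun _ => hasDerivAt_one_div
  refine (titeicaPDE_radial_iff rfl hderiv (hasDerivAt_neg_one_div_sq hs)).mpr ?_
  field_simp
  norm_num
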